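/- (Empty region around a separation line, on case) Suppose (g_n^*) is an optimal configuration with overall channel h^*, and g_n^* = F_{n,i} for some element n and index i. Then for every index l, 2·Re(conj(h^*)·(F_{n,l} − F_{n,i})) ≤ −|F_{n,l} − F_{n,i}|². Consequently, if h^* ≠ 0 and F_{n,l} ≠ F_{n,i}, then |F_{n,l} − F_{n,i}| ≤ 2|h^*| and ang(h^*, F_{n,l} − F_{n,i}) ≥ π/2 + arcsin(|F_{n,l} − F_{n,i}|/(2|h^*|)). -/

import Mathlib

/-- The angle in `[0,π]` between two nonzero complex numbers regarded as plane vectors: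
`ang a b = arccos (Re (a * conj b) / (|a| * |b|))`. -/
noncomputable def ang (a b : ℂ) : ℝ :=
  Real.arccos ((a * (starRingEnd ℂ) b).re / (‖a‖ * ‖b‖))

/-!
In a real inner product space, `‖h + d‖ ≤ ‖h‖` says exactly that `2⟪h, d⟫ ≤ -‖d‖²`. Dividing by
`2‖h‖‖d‖` bounds the cosine of the angle between `h` and `d` by `-‖d‖ / (2‖h‖)`, the cosine of
`π / 2 + arcsin (‖d‖ / (2‖h‖))`. Changing the choice of a single element of an optimal
configuration moves the overall channel from `h` to such an `h + d`.
-/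

open scoped RealInnerProductSpace
open InnerProductGeometry

theorem pi_div_two_add_arcsin_eq_arccos_neg (x : ℝ) :
    Real.pi / 2 + Real.arcsin x = Real.arccos (-x) := by
  rw [Real.arccos_eq_pi_div_two_sub_arcsin, Real.arcsin_neg, sub_neg_eq_add]

theorem sum_update_eq_sum_add_sub {ι M : Type*} [Fintype ι] [DecidableEq ι] [AddCommGroup M]
    (g : ι → M) (n : ι) (x : M) :
    ∑ m, Function.update g n x m = ∑ m, g m + (x - g n) := by
  rw [Finset.sum_update_of_mem (Finset.mem_univ n), ← Finset.erase_eq,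
    Finset.sum_erase_eq_sub (Finset.mem_univ n)]
  abel

theorem norm_add_sub_le_of_isMaxOn_pi {ι E : Type*} [Fintype ι] [SeminormedAddCommGroup E]
    {S : ι → Set E} {h₀ : E} {g : ι → E} (hg : g ∈ Set.univ.pi S)
    (hmax : IsMaxOn (fun g' ↦ ‖h₀ + ∑ m, g' m‖) (Set.univ.pi S) g)
    {n : ι} {x : E} (hx : x ∈ S n) :
    ‖(h₀ + ∑ m, g m) + (x - g n)‖ ≤ ‖h₀ + ∑ m, g m‖ := by
  classical
  have hupdate : Function.update g n x ∈ Set.univ.pi S :=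
    (Set.update_mem_pi_iff_of_mem hg).mpr fun _ ↦ hx
  simpa only [sum_update_eq_sum_add_sub, ← add_assoc] using isMaxOn_iff.mp hmax _ hupdate

theorem norm_le_two_mul_of_norm_add_le {E : Type*} [SeminormedAddCommGroup E] {h d : E}
    (hle : ‖h + d‖ ≤ ‖h‖) : ‖d‖ ≤ 2 * ‖h‖ :=
  calc
    ‖d‖ = ‖(h + d) - h‖ := by rw [add_sub_cancel_left]
    _ ≤ ‖h + d‖ + ‖h‖ := norm_sub_le _ _
    _ ≤ 2 * ‖h‖ := by linarith

theorem norm_add_le_norm_left_iff {E : Type*} [SeminormedAddCommGroup E] [InnerProductSpace ℝ E]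
    {h d : E} : ‖h + d‖ ≤ ‖h‖ ↔ 2 * ⟪h, d⟫ ≤ -‖d‖ ^ 2 := by
  rw [← sq_le_sq₀ (norm_nonneg _) (norm_nonneg _), norm_add_sq_real]
  constructor <;> intro <;> linarith

section

variable {E : Type*} [NormedAddCommGroup E] [InnerProductSpace ℝ E]

theorem pi_div_two_add_arcsin_le_angle {h d : E} (hd : d ≠ 0) (hle : ‖h + d‖ ≤ ‖h‖) :
    Real.pi / 2 + Real.arcsin (‖d‖ / (2 * ‖h‖)) ≤ angle h d := by
  have hd_pos : 0 < ‖d‖ := norm_pos_iff.mpr hd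
  have hh_pos : 0 < ‖h‖ := by linarith [norm_le_two_mul_of_norm_add_le hle]
  have hinner : 2 * ⟪h, d⟫ ≤ -‖d‖ ^ 2 := norm_add_le_norm_left_iff.mp hle
  have hcos : ⟪h, d⟫ / (‖h‖ * ‖d‖) ≤ -(‖d‖ / (2 * ‖h‖)) :=
    calc
      ⟪h, d⟫ / (‖h‖ * ‖d‖) ≤ (-‖d‖ ^ 2 / 2) / (‖h‖ * ‖d‖) := by gcongr; linarith
      _ = -(‖d‖ / (2 * ‖h‖)) := by field_simp
  rw [pi_div_two_add_arcsin_eq_arccos_neg]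
  exact Real.arccos_le_arccos hcos

theorem stmt_12_general {ι : Type*} [Fintype ι] {S : ι → Set E} {h₀ : E} {g : ι → E}
    (hg : g ∈ Set.univ.pi S)
    (hmax : IsMaxOn (fun g' ↦ ‖h₀ + ∑ m, g' m‖) (Set.univ.pi S) g)
    {n : ι} {x : E} (hx : x ∈ S n) :
    2 * ⟪h₀ + ∑ m, g m, x - g n⟫ ≤ -‖x - g n‖ ^ 2 ∧
      ‖x - g n‖ ≤ 2 * ‖h₀ + ∑ m, g m‖ ∧
      (x ≠ g n →
        Real.pi / 2 + Real.arcsin (‖x - g n‖ / (2 * ‖h₀ + ∑ m, g m‖)) ≤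
          angle (h₀ + ∑ m, g m) (x - g n)) := by
  have hle := norm_add_sub_le_of_isMaxOn_pi hg hmax hx
  exact ⟨norm_add_le_norm_left_iff.mp hle, norm_le_two_mul_of_norm_add_le hle,
    fun hne ↦ pi_div_two_add_arcsin_le_angle (sub_ne_zero.mpr hne) hle⟩

end

theorem re_conj_mul_eq_inner (a b : ℂ) : ((starRingEnd ℂ) a * b).re = ⟪a, b⟫ := by
  rw [Complex.inner, mul_comm]

theorem ang_eq_angle (a b : ℂ) : ang a b = angle a b := by
  rw [ang, angle, real_inner_comm, Complex.inner]

/-- Empty region around a separation line, on case: if `g n = F n i` is optimal then for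
every `l`, `2·Re(conj(h^*)·(F n l − F n i)) ≤ −|F n l − F n i|²`; consequently, if `h^* ≠ 0`
and `F n l ≠ F n i`, then `|F n l − F n i| ≤ 2|h^*|` and
`ang(h^*, F n l − F n i) ≥ π/2 + arcsin(|F n l − F n i|/(2|h^*|))`. -/
theorem stmt_12
    {N K : ℕ} (hN : 0 < N) (hK : 0 < K)
    (h_d : ℂ) (v : Fin N → ℂ) (φ : Fin K → ℝ)
    (hφinj : Function.Injective φ)
    (hφrange : ∀ i, 0 ≤ φ i ∧ φ i < 2 * Real.pi)
    (F : Fin N → Fin K → ℂ)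
    (hF : ∀ m i, F m i = v m * Complex.exp ((φ i : ℂ) * Complex.I))
    (g : Fin N → ℂ)
    (hg : ∀ m, g m = 0 ∨ ∃ i, g m = F m i)
    (hopt : ∀ g' : Fin N → ℂ, (∀ m, g' m = 0 ∨ ∃ i, g' m = F m i) →
      ‖h_d + ∑ m, g' m‖ ≤ ‖h_d + ∑ m, g m‖)
    (n : Fin N) (i : Fin K) (hi : g n = F n i) :
    ∀ l : Fin K,
      2 * ((starRingEnd ℂ) (h_d + ∑ m, g m) * (F n l - F n i)).re ≤
        -(‖F n l - F n i‖)^2 ∧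
      (h_d + ∑ m, g m ≠ 0 → F n l ≠ F n i →
        ‖F n l - F n i‖ ≤ 2 * ‖h_d + ∑ m, g m‖ ∧
        Real.pi / 2 +
            Real.arcsin (‖F n l - F n i‖ / (2 * ‖h_d + ∑ m, g m‖)) ≤
          ang (h_d + ∑ m, g m) (F n l - F n i)) := by
  intro l
  obtain ⟨hinner, hnorm, hangle⟩ := stmt_12_general (S := fun m ↦ {z | z = 0 ∨ ∃ i, z = F m i})
    (fun m _ ↦ hg m) (fun g' hg' ↦ hopt g' fun m ↦ hg' m trivial) (n := n) (.inr ⟨l, rfl⟩)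
  rw [hi] at hinner hnorm hangle
  rw [re_conj_mul_eq_inner, ang_eq_angle]
  exact ⟨hinner, fun _ hne ↦ ⟨hnorm, hangle hne⟩⟩
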